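/- Let G be a finite simple graph containing at least one cycle, with girth g(G) (the length of a shortest cycle of G). If k belongs to the strong convexity spectrum S_SC(G) and k ≠ 1, then k ≥ g(G). -/

import Mathlib

/-!  Common definitions: oriented graphs, geodesic convexity, convexity number,
strong convexity spectrum, and grid graphs. -/

variable {V : Type*}

/-- A directed walk of length `k` from `u` to `v` along the arc relation `A`,
encoded by the function `f` listing its vertices. -/
def IsDirWalk (A : V → V → Prop) (k : ℕ) (f : ℕ → V) (u v : V) : Prop :=
  f 0 = u ∧ f k = v ∧ ∀ i, i < k → A (f i) (f (i + 1))

/-- There is a directed walk from `u` to `v`. -/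
def DirReachable (A : V → V → Prop) (u v : V) : Prop :=
  ∃ k f, IsDirWalk A k f u v

/-- A digraph (given by its arc relation) is strongly connected. -/
def StrongConnected (A : V → V → Prop) : Prop :=
  ∀ u v : V, DirReachable A u v

/-- A `uv`-geodesic: a directed walk from `u` to `v` of minimum possible length
(such a walk is automatically a directed path). -/
def IsGeodesic (A : V → V → Prop) (k : ℕ) (f : ℕ → V) (u v : V) : Prop :=
  IsDirWalk A k f u v ∧ ∀ k' f', IsDirWalk A k' f' u v → k ≤ k'

/-- A nonempty vertex set `C` is convex if every vertex lying on a geodesic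
between two vertices of `C` (in either direction) belongs to `C`. -/
def DConvex (A : V → V → Prop) (C : Set V) : Prop :=
  C.Nonempty ∧ ∀ u ∈ C, ∀ v ∈ C, ∀ k f, IsGeodesic A k f u v → ∀ i ≤ k, f i ∈ C

/-- `A` is an orientation of the simple graph `G`: every arc is along an edge,
every edge gets an arc, and no edge gets both directions. -/
def IsOrientation (G : SimpleGraph V) (A : V → V → Prop) : Prop :=
  (∀ x y, A x y → G.Adj x y) ∧ (∀ x y, G.Adj x y → A x y ∨ A y x) ∧
    (∀ x y, A x y → ¬ A y x)

/-- The convexity number of a digraph: the maximum cardinality of a proper convex set. -/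
noncomputable def convexityNumber [Fintype V] (A : V → V → Prop) : ℕ :=
  sSup {k | ∃ C : Set V, DConvex A C ∧ C ≠ Set.univ ∧ C.ncard = k}

/-- The strong convexity spectrum of a graph: the set of convexity numbers of
its strongly connected orientations. -/
def strongConvexitySpectrum [Fintype V] (G : SimpleGraph V) : Set ℕ :=
  {k | ∃ A : V → V → Prop, IsOrientation G A ∧ StrongConnected A ∧ convexityNumber A = k}

/-- The grid graph `P_n □ P_m`. -/
def gridGraph (n m : ℕ) : SimpleGraph (Fin n × Fin m) :=
  (SimpleGraph.pathGraph n).boxProd (SimpleGraph.pathGraph m)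

/-!
A convex set `C` with at least two vertices induces a strongly connected digraph, because
the geodesics joining its vertices stay inside it. A strongly connected orientation has no
bridge: if `uv` were one, walks from `u` to `v` and from `v` to `u` would both have to cross it,
using the arcs `uv` and `vu`. So `G[C]` contains a cycle, of length at most `|C|`.
-/

theorem egirth_le_enatCard_of_not_isAcyclic {G : SimpleGraph V} (hG : ¬ G.IsAcyclic) :
    G.egirth ≤ ENat.card V := by
  obtain ⟨v, c, hc, hlen⟩ := SimpleGraph.exists_egirth_eq_length.mpr hG
  calc
    G.egirth = c.support.tail.length := by simp [hlen]
    _ ≤ ENat.card V := hc.support_nodup.length_le_enatCard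

section Digraph

variable {A : V → V → Prop} {C : Set V} {u v : V}

theorem DirReachable.exists_arc_of_mem_of_notMem (h : DirReachable A u v) (hu : u ∈ C)
    (hv : v ∉ C) : ∃ x ∈ C, ∃ y ∉ C, A x y := by
  by_contra! hclosed
  obtain ⟨k, f, rfl, rfl, harc⟩ := h
  have hmem : ∀ i ≤ k, f i ∈ C := by
    intro i hi
    induction i with
    | zero => exact hu
    | succ i ih =>
      by_contra hout
      exact hclosed _ (ih (by lia)) _ hout (harc i hi)
  exact hv (hmem k le_rfl)

theorem DirReachable.arc_of_isBridge {G : SimpleGraph V} (h : DirReachable A u v)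
    (hAG : ∀ x y, A x y → G.Adj x y) (hbridge : G.IsBridge s(u, v)) : A u v := by
  obtain ⟨x, hx, y, hy, hxy⟩ :=
    h.exists_arc_of_mem_of_notMem (C := {w | (G.deleteEdges {s(u, v)}).Reachable u w}) .rfl hbridge
  have heq : s(x, y) = s(u, v) := by
    by_contra hne
    have hadj : (G.deleteEdges {s(u, v)}).Adj x y :=
      SimpleGraph.deleteEdges_adj.mpr ⟨hAG x y hxy, hne⟩
    exact hy (hx.trans hadj.reachable)
  rcases Sym2.eq_iff.mp heq with ⟨rfl, rfl⟩ | ⟨rfl, rfl⟩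
  · exact hxy
  · exact absurd hx hbridge

theorem StrongConnected.not_isBridge {G : SimpleGraph V} (hA : StrongConnected A)
    (hAG : ∀ x y, A x y → G.Adj x y) (hasymm : ∀ x y, A x y → ¬ A y x) (e : Sym2 V) :
    ¬ G.IsBridge e := by
  induction e with
  | h u v =>
    intro huv
    exact hasymm u v ((hA u v).arc_of_isBridge hAG huv)
      ((hA v u).arc_of_isBridge hAG (Sym2.eq_swap ▸ huv))

theorem StrongConnected.not_isAcyclic [Nontrivial V] {G : SimpleGraph V} (hA : StrongConnected A)
    (hAG : ∀ x y, A x y → G.Adj x y) (hasymm : ∀ x y, A x y → ¬ A y x) : ¬ G.IsAcyclic := by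
  obtain ⟨u, v, huv⟩ := exists_pair_ne V
  obtain ⟨x, -, y, -, hxy⟩ :=
    (hA u v).exists_arc_of_mem_of_notMem (Set.mem_singleton u) huv.symm
  intro hG
  exact hA.not_isBridge hAG hasymm s(x, y)
    (SimpleGraph.isAcyclic_iff_forall_adj_isBridge.mp hG (hAG x y hxy))

theorem DirReachable.exists_isGeodesic (h : DirReachable A u v) : ∃ k f, IsGeodesic A k f u v := by
  classical
  have hwalk : ∃ k f, IsDirWalk A k f u v := h
  obtain ⟨f, hf⟩ := Nat.find_spec hwalk
  exact ⟨Nat.find hwalk, f, hf, fun k' f' hf' ↦ Nat.find_min' hwalk ⟨f', hf'⟩⟩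

theorem DConvex.strongConnected_induce (hC : DConvex A C) (hA : StrongConnected A) :
    StrongConnected fun x y : C ↦ A x y := by
  rintro ⟨u, hu⟩ ⟨v, hv⟩
  obtain ⟨k, f, hf⟩ := (hA u v).exists_isGeodesic
  -- `f` is unconstrained beyond `k`, so it is frozen there to take values in `C`.
  have hmem : ∀ i, f (min i k) ∈ C := fun i ↦ hC.2 u hu v hv k f hf _ (min_le_right i k)
  obtain ⟨⟨rfl, rfl, harc⟩, -⟩ := hf
  refine ⟨k, fun i ↦ ⟨f (min i k), hmem i⟩, by simp, by simp, fun i hi ↦ ?_⟩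
  simpa [min_eq_left hi.le, min_eq_left (Nat.succ_le_of_lt hi)] using harc i hi

theorem DConvex.egirth_le_encard {G : SimpleGraph V} (hC : DConvex A C) (hA : StrongConnected A)
    (hAG : ∀ x y, A x y → G.Adj x y) (hasymm : ∀ x y, A x y → ¬ A y x) (hnt : C.Nontrivial) :
    G.egirth ≤ C.encard := by
  have := hnt.coe_sort
  have hcyc : ¬ (G.induce C).IsAcyclic :=
    (hC.strongConnected_induce hA).not_isAcyclic (fun x y ↦ hAG x y) (fun x y ↦ hasymm x y)
  calc
    G.egirth ≤ (G.induce C).egirth :=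
      (SimpleGraph.Embedding.induce C).isContained.egirth_le
    _ ≤ C.encard := egirth_le_enatCard_of_not_isAcyclic hcyc

theorem dConvex_singleton (A : V → V → Prop) (u : V) : DConvex A {u} := by
  refine ⟨Set.singleton_nonempty u, ?_⟩
  rintro _ rfl v rfl k f ⟨hf, hmin⟩ i hi
  have hk : k ≤ 0 := hmin 0 (fun _ ↦ v) ⟨rfl, rfl, by simp⟩
  obtain rfl : i = 0 := by lia
  exact hf.1

variable (A) in
theorem bddAbove_ncard_dConvex [Finite V] :
    BddAbove {k | ∃ C : Set V, DConvex A C ∧ C ≠ Set.univ ∧ C.ncard = k} := by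
  refine ⟨Nat.card V, ?_⟩
  rintro _ ⟨C, -, -, rfl⟩
  exact Set.ncard_le_card C

theorem DConvex.ncard_le_convexityNumber [Fintype V] (hC : DConvex A C) (hne : C ≠ Set.univ) :
    C.ncard ≤ convexityNumber A :=
  le_csSup (bddAbove_ncard_dConvex A) ⟨C, hC, hne, rfl⟩

variable (A) in
theorem one_le_convexityNumber [Fintype V] [Nontrivial V] : 1 ≤ convexityNumber A := by
  obtain ⟨u⟩ : Nonempty V := inferInstance
  simpa using (dConvex_singleton A u).ncard_le_convexityNumber (Set.singleton_ne_univ u)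

variable (A) in
theorem exists_dConvex_ncard_eq_convexityNumber [Fintype V] [Nontrivial V] :
    ∃ C : Set V, DConvex A C ∧ C ≠ Set.univ ∧ C.ncard = convexityNumber A := by
  obtain ⟨u⟩ : Nonempty V := inferInstance
  refine Nat.sSup_mem ?_ (bddAbove_ncard_dConvex A)
  exact ⟨1, {u}, dConvex_singleton A u, Set.singleton_ne_univ u, Set.ncard_singleton u⟩

end Digraph

/-- Every member of the strong convexity spectrum other than `1` is at least the girth. -/
theorem girth_le_of_mem_strongConvexitySpectrum {V : Type*} [Fintype V]
    (G : SimpleGraph V) (hcyc : ¬ G.IsAcyclic) (k : ℕ)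
    (hk : k ∈ strongConvexitySpectrum G) (hk1 : k ≠ 1) :
    G.girth ≤ (k : ℕ∞) := by
  obtain ⟨A, ⟨hAG, -, hasymm⟩, hA, rfl⟩ := hk
  have : Nontrivial V := by
    rw [← not_subsingleton_iff_nontrivial]
    exact fun _ ↦ hcyc SimpleGraph.IsAcyclic.of_subsingleton
  obtain ⟨C, hC, -, hcard⟩ := exists_dConvex_ncard_eq_convexityNumber A
  have hnt : C.Nontrivial := by
    rw [← Set.one_lt_ncard_iff_nontrivial, hcard]
    exact (one_le_convexityNumber A).lt_of_ne' hk1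
  calc
    (G.girth : ℕ∞) ≤ G.egirth := ENat.natCast_toNat_le_self _
    _ ≤ C.encard := hC.egirth_le_encard hA hAG hasymm hnt
    _ = convexityNumber A := by rw [← hcard, C.toFinite.cast_ncard_eq]
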